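/- arXiv:0902.0943 — 2 statements merged into one kernel-verified Lean document; each statement's English description precedes it below -/
import Mathlib

section
/- Let d ≥ 2. There is a constant C depending only on d and ψ such that for any radii r, r' > 1 and any points y, y' ∈ ℝ^d, |⟨F_{y,r}, F_{y',r'}⟩| ≤ C (r r')^{(d−1)/2} / (1 + |y − y'| + |r − r'|)^{(d−1)/2}. -/
open MeasureTheory Metric Set
open scoped FourierTransform ENNReal NNReal

noncomputable section

abbrev Ed (d : ℕ) := EuclideanSpace ℝ (Fin d)

/-- Surface measure on the sphere of radius `r` centered at the origin in `ℝ^d`: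
the `(d-1)`-dimensional Hausdorff measure restricted to the sphere. -/
def sphereM (d : ℕ) (r : ℝ) : Measure (Ed d) :=
  (μH[(d : ℝ) - 1]).restrict (Metric.sphere (0 : Ed d) r)

/-- `ψ₀` is admissible: radial, `C^∞`, supported in the ball of radius `1/10`, and
its Fourier transform vanishes to order `20d` at the origin. -/
def Admissible (d : ℕ) (ψ₀ : Ed d → ℂ) : Prop :=
  ContDiff ℝ (⊤ : ℕ∞) ψ₀ ∧
  (∀ x, ψ₀ x ≠ 0 → ‖x‖ ≤ 1 / 10) ∧
  (∀ x y : Ed d, ‖x‖ = ‖y‖ → ψ₀ x = ψ₀ y) ∧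
  (∀ n : ℕ, n < 20 * d → iteratedFDeriv ℝ n (𝓕 ψ₀) 0 = 0)

/-- `ψ = ψ₀ * ψ₀` (convolution). -/
def psiOf (d : ℕ) (ψ₀ : Ed d → ℂ) : Ed d → ℂ :=
  fun x => ∫ y, ψ₀ y * ψ₀ (x - y)

/-- `F_{y,r} = σ_r * ψ(· - y)`. -/
def Fyr (d : ℕ) (ψ₀ : Ed d → ℂ) (y : Ed d) (r : ℝ) : Ed d → ℂ :=
  fun x => ∫ z, psiOf d ψ₀ (x - y - z) ∂(sphereM d r)


section sphereFacts

open scoped RealInnerProductSpace Pointwise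

lemma hemi_finite (d : ℕ) (hd : 2 ≤ d) (v : Ed d) (hv : ‖v‖ = 1) :
    μH[(d : ℝ) - 1] (sphere (0 : Ed d) 1 ∩ {x | ⟪v, x⟫ ≤ 0}) < ⊤ := by
  obtain ⟨n, rfl⟩ : ∃ n, d = n + 1 := ⟨d - 1, by omega⟩
  have : Fact (Module.finrank ℝ (Ed (n+1)) = n + 1) := ⟨by simp⟩
  have hv0 : v ≠ 0 := by intro h; simp [h] at hv
  have hfin : Module.finrank ℝ ((ℝ ∙ v)ᗮ : Submodule ℝ (Ed (n+1))) = n :=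
    Submodule.finrank_orthogonal_span_singleton hv0
  have hcast : (((n + 1 : ℕ) : ℝ) - 1) = ((Module.finrank ℝ ((ℝ ∙ v)ᗮ : Submodule ℝ (Ed (n+1))) : ℕ) : ℝ) := by
    rw [hfin]; push_cast; ring
  set V := ((ℝ ∙ v)ᗮ : Submodule ℝ (Ed (n+1))) with hV
  let f : V → Ed (n+1) := fun w => stereoInvFunAux v (w : Ed (n+1))
  have hf : ContDiff ℝ 1 f := contDiff_stereoInvFunAux.comp V.subtypeL.contDiff
  have hcomp : IsCompact (closedBall (0 : V) 2) := isCompact_closedBall 0 2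
  obtain ⟨K, hK⟩ := LocallyLipschitzOn.exists_lipschitzOnWith_of_compact hcomp
    (hf.locallyLipschitz.locallyLipschitzOn (s := closedBall (0 : V) 2))
  have hsub : (sphere (0 : Ed (n+1)) 1 ∩ {x | ⟪v, x⟫ ≤ 0}) ⊆ f '' (closedBall (0 : V) 2) := by
    rintro x ⟨hx, hx2⟩
    have hx2 : ⟪v, x⟫ ≤ 0 := hx2
    have hx1 : ‖x‖ = 1 := by simpa using hx
    have hne : x ≠ v := by
      rintro rfl
      rw [real_inner_self_eq_norm_sq, hv] at hx2; norm_num at hx2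
    refine ⟨stereoToFun v x, ?_, ?_⟩
    · rw [mem_closedBall_zero_iff, stereoToFun_apply, norm_smul]
      have h1 : ‖(ℝ ∙ v)ᗮ.orthogonalProjectionOnto x‖ ≤ 1 := by
        refine (Submodule.norm_orthogonalProjectionOnto_apply_le _ _).trans hx1.le
      have h2 : ‖2 / (1 - ((innerSL ℝ) v) x)‖ ≤ 2 := by
        rw [innerSL_apply_apply, Real.norm_of_nonneg (div_nonneg zero_le_two (by linarith))]
        rw [div_le_iff₀ (by linarith)]; linarith
      calc _ ≤ (2:ℝ) * 1 := mul_le_mul h2 h1 (norm_nonneg _) (by norm_num)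
        _ = 2 := by norm_num
    · have := stereo_left_inv hv (x := ⟨x, hx⟩) hne
      exact congrArg Subtype.val this
  have h0 : (0:ℝ) ≤ ((n + 1 : ℕ) : ℝ) - 1 := by push_cast; linarith [(Nat.cast_nonneg n : (0:ℝ) ≤ n)]
  refine (measure_mono hsub).trans_lt ((hK.hausdorffMeasure_image_le h0).trans_lt ?_)
  refine ENNReal.mul_lt_top (ENNReal.rpow_lt_top_of_nonneg h0 ENNReal.coe_ne_top) ?_
  rw [hcast]
  have : (μH[((Module.finrank ℝ V : ℕ) : ℝ)] : Measure V).IsAddHaarMeasure :=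
    isAddHaarMeasure_hausdorffMeasure
  exact hcomp.measure_lt_top

lemma sphere_finite (d : ℕ) (hd : 2 ≤ d) : IsFiniteMeasure (sphereM d 1) := by
  constructor
  rw [sphereM, Measure.restrict_apply_univ]
  let v : Ed d := EuclideanSpace.single ⟨0, by omega⟩ 1
  have hv : ‖v‖ = 1 := by simp [v]
  have h1 := hemi_finite d hd v hv
  have h2 := hemi_finite d hd (-v) (by simpa using hv)
  refine (measure_mono ?_).trans_lt (measure_union_lt_top h1 h2)
  intro x hx
  rcases le_total ⟪v, x⟫ 0 with h | h
  · exact Or.inl ⟨hx, h⟩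
  · exact Or.inr ⟨hx, by simpa using h⟩

lemma sphere_mp (d : ℕ) (A : Ed d ≃ₗᵢ[ℝ] Ed d) : MeasurePreserving A (sphereM d 1) (sphereM d 1) := by
  have h := (A.toIsometryEquiv.measurePreserving_hausdorffMeasure ((d:ℝ) - 1)).restrict_preimage
    (s := sphere (0 : Ed d) 1) isClosed_sphere.measurableSet
  have : (A.toIsometryEquiv ⁻¹' sphere (0 : Ed d) 1) = sphere 0 1 := by
    ext x; simp
  rw [this] at h
  exact h

lemma sphere_scale (d : ℕ) (hd : 2 ≤ d) (r : ℝ) (hr : 0 < r) :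
    sphereM d r = ENNReal.ofReal (r ^ ((d:ℝ) - 1)) • (sphereM d 1).map (fun z => r • z) := by
  have h0 : (0:ℝ) ≤ (d:ℝ) - 1 := by
    have : (2:ℝ) ≤ d := by exact_mod_cast hd
    linarith
  ext s hs
  have hm : Measurable (fun z : Ed d => r • z) := by fun_prop
  rw [Measure.smul_apply, Measure.map_apply hm hs, sphereM, sphereM, Measure.restrict_apply hs,
    Measure.restrict_apply (hm hs)]
  have : s ∩ sphere (0 : Ed d) r = r • (((fun z : Ed d => r • z) ⁻¹' s) ∩ sphere (0 : Ed d) 1) := by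
    ext x
    rw [Set.mem_smul_set_iff_inv_smul_mem₀ hr.ne']
    simp only [mem_inter_iff, mem_preimage, mem_sphere_iff_norm, sub_zero, norm_smul, norm_inv,
      Real.norm_of_nonneg hr.le, smul_inv_smul₀ hr.ne']
    rw [inv_mul_eq_one₀ hr.ne']
    exact and_congr_right fun _ => eq_comm
  rw [this, Measure.hausdorffMeasure_smul₀ h0 hr.ne']
  rw [ENNReal.smul_def, smul_eq_mul, smul_eq_mul]
  congr 1
  rw [ENNReal.ofReal, ENNReal.coe_inj]
  ext
  rw [NNReal.coe_rpow, coe_nnnorm, Real.norm_of_nonneg hr.le, Real.coe_toNNReal _ (by positivity)]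

lemma sphere_integral (d : ℕ) (hd : 2 ≤ d) (r : ℝ) (hr : 0 < r) (f : Ed d → ℂ) :
    ∫ z, f z ∂(sphereM d r) = ((r ^ ((d:ℝ) - 1) : ℝ) : ℂ) * ∫ z, f (r • z) ∂(sphereM d 1) := by
  rw [sphere_scale d hd r hr, integral_smul_measure, ENNReal.toReal_ofReal (by positivity)]
  have : MeasurableEmbedding (fun z : Ed d => r • z) :=
    (Homeomorph.smulOfNeZero r hr.ne').measurableEmbedding
  rw [this.integral_map]
  rw [Complex.real_smul]

lemma sphere_ae (d : ℕ) (r : ℝ) : ∀ᵐ z ∂(sphereM d r), ‖z‖ = r := by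
  filter_upwards [ae_restrict_mem (isClosed_sphere.measurableSet)] with z hz
  simpa using hz

end sphereFacts

section decay

open scoped RealInnerProductSpace

/-- The (real) Fourier transform of the unit sphere measure. -/
def msph (d : ℕ) (ξ : Ed d) : ℝ := ∫ z, Real.cos ⟪ξ, z⟫ ∂(sphereM d 1)

lemma msph_isom (d : ℕ) (A : Ed d ≃ₗᵢ[ℝ] Ed d) (ξ : Ed d) : msph d (A ξ) = msph d ξ := by
  unfold msph
  rw [← (sphere_mp d A).integral_comp A.toHomeomorph.measurableEmbedding]
  simp

lemma exists_isom (d : ℕ) (x y : Ed d) (h : ‖x‖ = ‖y‖) : ∃ A : Ed d ≃ₗᵢ[ℝ] Ed d, A x = y :=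
  ⟨(ℝ ∙ (x - y))ᗮ.reflection, Submodule.reflection_sub h⟩

lemma msph_radial (d : ℕ) (x y : Ed d) (h : ‖x‖ = ‖y‖) : msph d x = msph d y := by
  obtain ⟨A, rfl⟩ := exists_isom d x y h
  rw [msph_isom]

lemma msph_le (d : ℕ) (hd : 2 ≤ d) (ξ : Ed d) : |msph d ξ| ≤ (sphereM d 1).real univ := by
  have := sphere_finite d hd
  have h := norm_integral_le_of_norm_le_const (μ := sphereM d 1) (f := fun z => Real.cos ⟪ξ, z⟫) (C := 1)
    (Filter.Eventually.of_forall fun z => Real.abs_cos_le_one _)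
  simpa [msph] using h

lemma sphere_integrable (d : ℕ) (hd : 2 ≤ d) {G : Type*} [NormedAddCommGroup G]
    [SecondCountableTopology G] (f : Ed d → G) (hf : Continuous f) :
    Integrable f (sphereM d 1) := by
  have := sphere_finite d hd
  obtain ⟨B, hB⟩ := (isCompact_sphere (0 : Ed d) 1).exists_bound_of_continuousOn hf.continuousOn
  refine Integrable.of_bound hf.aestronglyMeasurable B ?_
  filter_upwards [sphere_ae d 1] with z hz
  exact hB z (by simpa using hz)

lemma deriv_int (d : ℕ) (hd : 2 ≤ d) (F F' : ℝ → Ed d → ℝ)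
    (hF : Continuous (Function.uncurry F)) (hF' : Continuous (Function.uncurry F'))
    (h : ∀ s z, HasDerivAt (fun t => F t z) (F' s z) s) (s : ℝ) :
    HasDerivAt (fun t => ∫ z, F t z ∂(sphereM d 1)) (∫ z, F' s z ∂(sphereM d 1)) s := by
  have := sphere_finite d hd
  have hc : ∀ s, Continuous (F s) := fun s => hF.comp (by fun_prop : Continuous fun z => (s, z))
  have hc' : ∀ s, Continuous (F' s) := fun s => hF'.comp (by fun_prop : Continuous fun z => (s, z))
  obtain ⟨B, hB⟩ := ((isCompact_closedBall s 1).prod (isCompact_sphere (0 : Ed d) 1)).exists_bound_of_continuousOn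
    hF'.continuousOn
  refine (hasDerivAt_integral_of_dominated_loc_of_deriv_le (bound := fun _ => B)
    (closedBall_mem_nhds s one_pos) ?_ ?_ ?_ ?_ ?_ ?_).2
  · exact Filter.Eventually.of_forall fun x => (hc x).aestronglyMeasurable
  · exact sphere_integrable d hd _ (hc s)
  · exact (hc' s).aestronglyMeasurable
  · filter_upwards [sphere_ae d 1] with z hz x hx
    exact hB (x, z) ⟨hx, by simpa using hz⟩
  · exact integrable_const _
  · exact Filter.Eventually.of_forall fun z x _ => h x z

lemma rot_identity (d : ℕ) (hd : 2 ≤ d) (i j : Fin d) (hij : i ≠ j) (s : ℝ) :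
    s * ∫ z, z i * Real.sin (s * z i) ∂(sphereM d 1) =
      s ^ 2 * ∫ z, (z j) ^ 2 * Real.cos (s * z i) ∂(sphereM d 1) := by
  let F : ℝ → Ed d → ℝ := fun t z => Real.cos (s * (Real.cos t * z i + Real.sin t * z j))
  let F' : ℝ → Ed d → ℝ := fun t z => - Real.sin (s * (Real.cos t * z i + Real.sin t * z j)) *
    (s * (-Real.sin t * z i + Real.cos t * z j))
  let F'' : ℝ → Ed d → ℝ := fun t z => - Real.cos (s * (Real.cos t * z i + Real.sin t * z j)) *
    (s * (-Real.sin t * z i + Real.cos t * z j)) ^ 2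
    - Real.sin (s * (Real.cos t * z i + Real.sin t * z j)) * (s * (-Real.cos t * z i - Real.sin t * z j))
  have hi : ∀ t (z : Ed d), HasDerivAt (fun t => s * (Real.cos t * z i + Real.sin t * z j))
      (s * (-Real.sin t * z i + Real.cos t * z j)) t := fun t z =>
    (((Real.hasDerivAt_cos t).mul_const _).add ((Real.hasDerivAt_sin t).mul_const _)).const_mul s
  have hi' : ∀ t (z : Ed d), HasDerivAt (fun t => s * (-Real.sin t * z i + Real.cos t * z j))
      (s * (-Real.cos t * z i - Real.sin t * z j)) t := fun t z => by
    have := ((((Real.hasDerivAt_sin t).neg).mul_const (z i)).add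
      ((Real.hasDerivAt_cos t).mul_const (z j))).const_mul s
    refine HasDerivAt.congr_deriv this ?_; ring
  have d1 : ∀ t z, HasDerivAt (fun t => F t z) (F' t z) t := fun t z => (hi t z).cos
  have d2 : ∀ t z, HasDerivAt (fun t => F' t z) (F'' t z) t := fun t z => by
    refine HasDerivAt.congr_deriv (((hi t z).sin.neg).mul (hi' t z)) ?_
    simp only [F'', Pi.neg_apply]; ring
  have c1 : Continuous (Function.uncurry F) := by simp only [F, Function.uncurry_def]; fun_prop
  have c2 : Continuous (Function.uncurry F') := by simp only [F', Function.uncurry_def]; fun_prop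
  have c3 : Continuous (Function.uncurry F'') := by simp only [F'', Function.uncurry_def]; fun_prop
  have k1 := deriv_int d hd F F' c1 c2 d1
  have k2 := deriv_int d hd F' F'' c2 c3 d2 0
  have hconst : (fun t => ∫ z, F t z ∂(sphereM d 1)) = fun _ => msph d (EuclideanSpace.single i s) := by
    funext t
    have : ∫ z, F t z ∂(sphereM d 1) = msph d (EuclideanSpace.single i (s * Real.cos t) +
        EuclideanSpace.single j (s * Real.sin t)) := by
      unfold msph
      congr 1; funext z
      simp only [F, inner_add_left, EuclideanSpace.inner_single_left]
      congr 1; simp; ring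
    rw [this]
    apply msph_radial
    rw [← sq_eq_sq₀ (norm_nonneg _) (norm_nonneg _), norm_add_sq_real]
    simp [EuclideanSpace.inner_single_left, hij, mul_pow]
    rw [← mul_add, Real.cos_sq_add_sin_sq, mul_one]
  have hz : (fun t => ∫ z, F' t z ∂(sphereM d 1)) = fun _ => 0 := by
    funext t
    have := k1 t
    rw [hconst] at this
    exact this.unique (hasDerivAt_const _ _)
  rw [hz] at k2
  have h0 := k2.unique (hasDerivAt_const _ _)
  have e : ∀ z : Ed d, F'' 0 z = s * (z i * Real.sin (s * z i)) - s ^ 2 * ((z j) ^ 2 * Real.cos (s * z i)) := by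
    intro z; simp [F'']; ring
  simp_rw [e] at h0
  rw [integral_sub, integral_const_mul, integral_const_mul] at h0
  · linarith
  · exact sphere_integrable d hd _ (by fun_prop)
  · exact sphere_integrable d hd _ (by fun_prop)

lemma energy (n : ℝ) (p q q' : ℝ → ℝ) (hp : ∀ s, HasDerivAt p (q s) s)
    (hq : ∀ s, HasDerivAt q (q' s) s) (hode : ∀ s, 1 ≤ s → s * (q' s + p s) = - n * q s) :
    ∃ C : ℝ, ∀ s, 1 ≤ s → s ^ n * (p s) ^ 2 ≤ C := by
  set c := |n ^ 2 / 4 - n / 2| with hc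
  let P : ℝ → ℝ := fun s => q s + n / 2 * (p s * s⁻¹)
  let E : ℝ → ℝ := fun s => s ^ n * (P s ^ 2 + p s ^ 2) * Real.exp (c * s⁻¹)
  have hP : ∀ s, 1 ≤ s → HasDerivAt P (q' s + n / 2 * (q s * s⁻¹ + p s * (-(s ^ 2)⁻¹))) s := by
    intro s hs
    exact (hq s).add (((hp s).mul (hasDerivAt_inv (by linarith))).const_mul _)
  have hE : ∀ s, 1 ≤ s → HasDerivAt E (s ^ n * Real.exp (c * s⁻¹) * (s ^ 2)⁻¹ *
      (2 * (n ^ 2 / 4 - n / 2) * (P s * p s) - c * (P s ^ 2 + p s ^ 2))) s := by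
    intro s hs
    have hs0 : s ≠ 0 := by linarith
    have h1 : HasDerivAt (fun s : ℝ => s ^ n) (n * s ^ (n - 1)) s := Real.hasDerivAt_rpow_const (Or.inl hs0)
    have h2 := (h1.mul (((hP s hs).pow 2).add ((hp s).pow 2))).mul
      (((hasDerivAt_inv hs0).const_mul c).exp)
    refine HasDerivAt.congr_deriv h2 ?_
    have hq' : q' s = - n * q s * s⁻¹ - p s := by
      have := hode s hs
      field_simp; linarith
    rw [hq', Real.rpow_sub_one hs0]
    simp only [P, Pi.add_apply, Pi.mul_apply, Pi.pow_apply]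
    ring
  have hanti : AntitoneOn E (Ici 1) := by
    apply antitoneOn_of_deriv_nonpos (convex_Ici 1)
    · exact fun s hs => (hE s hs).continuousAt.continuousWithinAt
    · intro s hs
      rw [interior_Ici] at hs
      exact (hE s (le_of_lt hs)).differentiableAt.differentiableWithinAt
    · intro s hs
      rw [interior_Ici] at hs
      have hs : 1 < s := hs
      rw [(hE s hs.le).deriv]
      have hs0 : 0 < s := by linarith
      apply mul_nonpos_of_nonneg_of_nonpos (by positivity)
      have h1 : 2 * (n ^ 2 / 4 - n / 2) * (P s * p s) ≤ c * (2 * |P s * p s|) := by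
        calc _ ≤ |2 * (n ^ 2 / 4 - n / 2) * (P s * p s)| := le_abs_self _
          _ = _ := by rw [abs_mul, abs_mul, ← hc]; simp; ring
      have h2 : 2 * |P s * p s| ≤ P s ^ 2 + p s ^ 2 := by
        rw [abs_mul, ← sq_abs (P s), ← sq_abs (p s)]
        nlinarith [sq_nonneg (|P s| - |p s|)]
      have := mul_le_mul_of_nonneg_left h2 (abs_nonneg (n ^ 2 / 4 - n / 2))
      rw [← hc] at this
      linarith
  refine ⟨E 1, fun s hs => ?_⟩
  refine le_trans ?_ (hanti (mem_Ici.2 le_rfl) (mem_Ici.2 hs) hs)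
  have hs0 : 0 < s := by linarith
  have h1 : 1 ≤ Real.exp (c * s⁻¹) := Real.one_le_exp (by positivity)
  have hsn : 0 < s ^ n := by positivity
  calc s ^ n * p s ^ 2 ≤ s ^ n * (P s ^ 2 + p s ^ 2) := by gcongr; nlinarith [sq_nonneg (P s)]
    _ = s ^ n * (P s ^ 2 + p s ^ 2) * 1 := by ring
    _ ≤ _ := by simp only [E]; gcongr

lemma msph_decay (d : ℕ) (hd : 2 ≤ d) : ∃ C : ℝ, 0 < C ∧ (∀ ξ, |msph d ξ| ≤ C) ∧
    ∀ ξ, ξ ≠ 0 → |msph d ξ| ≤ C * ‖ξ‖ ^ (-(((d:ℝ) - 1) / 2)) := by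
  have := sphere_finite d hd
  let i : Fin d := ⟨0, by omega⟩
  let p : ℝ → ℝ := fun s => ∫ z, Real.cos (s * z i) ∂(sphereM d 1)
  let q : ℝ → ℝ := fun s => ∫ z, - Real.sin (s * z i) * z i ∂(sphereM d 1)
  let q' : ℝ → ℝ := fun s => ∫ z, - (Real.cos (s * z i) * z i) * z i ∂(sphereM d 1)
  have hi : ∀ t (z : Ed d), HasDerivAt (fun t => t * z i) (z i) t := fun t z => by
    simpa using (hasDerivAt_id t).mul_const (z i)
  have hp : ∀ s, HasDerivAt p (q s) s := deriv_int d hd (fun s z => Real.cos (s * z i))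
    (fun s z => - Real.sin (s * z i) * z i) (by simp only [Function.uncurry_def]; fun_prop)
    (by simp only [Function.uncurry_def]; fun_prop) (fun s z => (hi s z).cos)
  have hq : ∀ s, HasDerivAt q (q' s) s := deriv_int d hd (fun s z => - Real.sin (s * z i) * z i)
    (fun s z => - (Real.cos (s * z i) * z i) * z i) (by simp only [Function.uncurry_def]; fun_prop)
    (by simp only [Function.uncurry_def]; fun_prop) (fun s z => ((hi s z).sin.neg).mul_const _)
  have hode : ∀ s, 1 ≤ s → s * (q' s + p s) = - ((d:ℝ) - 1) * q s := by
    intro s hs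
    have hs0 : s ≠ 0 := by linarith
    have h1 : ∀ j ∈ Finset.univ.erase i, s * ∫ z, (z j) ^ 2 * Real.cos (s * z i) ∂(sphereM d 1) = - q s := by
      intro j hj
      have := rot_identity d hd i j (Finset.ne_of_mem_erase hj).symm s
      have e : ∫ z, z i * Real.sin (s * z i) ∂(sphereM d 1) = - q s := by
        simp only [q]; rw [← integral_neg]; congr 1; funext z; ring
      rw [e] at this
      apply mul_left_cancel₀ hs0
      linarith
    have h2 : q' s + p s = ∑ j ∈ Finset.univ.erase i, ∫ z, (z j) ^ 2 * Real.cos (s * z i) ∂(sphereM d 1) := by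
      rw [← integral_finsetSum _ (fun j _ => sphere_integrable d hd _ (by fun_prop))]
      simp only [p, q']
      rw [← integral_add (sphere_integrable d hd _ (by fun_prop)) (sphere_integrable d hd _ (by fun_prop))]
      apply integral_congr_ae
      filter_upwards [sphere_ae d 1] with z hz
      have : ∑ j, (z j) ^ 2 = 1 := by
        rw [← EuclideanSpace.real_norm_sq_eq, hz]; norm_num
      rw [← Finset.add_sum_erase _ _ (Finset.mem_univ i)] at this
      rw [← Finset.sum_mul, eq_sub_of_add_eq' this]; ring
    rw [h2, Finset.mul_sum, Finset.sum_congr rfl h1, Finset.sum_const, Finset.card_erase_of_mem (Finset.mem_univ i)]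
    simp only [Finset.card_univ, Fintype.card_fin, nsmul_eq_mul]
    rw [Nat.cast_sub (by omega)]; push_cast; ring
  obtain ⟨C, hC⟩ := energy ((d:ℝ) - 1) p q q' hp hq hode
  set M := (sphereM d 1).real univ with hM
  have hM0 : 0 ≤ M := measureReal_nonneg
  refine ⟨M + |C| + 1, by positivity, fun ξ => (msph_le d hd ξ).trans (by linarith [abs_nonneg C]), ?_⟩
  intro ξ hξ
  have hn : 0 < ‖ξ‖ := norm_pos_iff.2 hξ
  have hα : 0 ≤ ((d:ℝ) - 1) / 2 := by
    have : (2:ℝ) ≤ d := by exact_mod_cast hd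
    linarith
  rcases le_total ‖ξ‖ 1 with h | h
  · have : 1 ≤ ‖ξ‖ ^ (-(((d:ℝ) - 1) / 2)) := Real.one_le_rpow_of_pos_of_le_one_of_nonpos hn h (by linarith)
    have h2 := msph_le d hd ξ
    nlinarith [abs_nonneg C]
  · have h1 := hC ‖ξ‖ h
    have hpm : p ‖ξ‖ = msph d ξ := by
      rw [msph_radial d ξ (EuclideanSpace.single i ‖ξ‖) (by simp)]
      simp only [p, msph]
      congr 1; funext z
      simp [EuclideanSpace.inner_single_left]
    rw [hpm] at h1
    have h2 : (‖ξ‖ ^ (((d:ℝ) - 1) / 2) * |msph d ξ|) ^ 2 ≤ (M + |C| + 1) ^ 2 := by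
      rw [mul_pow, sq_abs, ← Real.rpow_natCast, ← Real.rpow_mul hn.le]
      have e : ((d:ℝ) - 1) / 2 * (2:ℕ) = (d:ℝ) - 1 := by push_cast; ring
      rw [e]
      nlinarith [abs_nonneg C, le_abs_self C]
    have h3 := abs_le_of_sq_le_sq h2 (by positivity)
    rw [Real.rpow_neg hn.le, ← div_eq_mul_inv, le_div_iff₀ (by positivity)]
    linarith [(abs_le.1 h3).2]

end decay

section fourierSide

open scoped RealInnerProductSpace

lemma sphere_cexp (d : ℕ) (hd : 2 ≤ d) (ξ : Ed d) :
    ∫ z, Complex.exp (((⟪ξ, z⟫ : ℝ) : ℂ) * Complex.I) ∂(sphereM d 1) = (msph d ξ : ℂ) := by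
  have hs : ∫ z, Real.sin ⟪ξ, z⟫ ∂(sphereM d 1) = 0 := by
    have h := (sphere_mp d (LinearIsometryEquiv.neg ℝ)).integral_comp
      (LinearIsometryEquiv.neg ℝ (E := Ed d)).toHomeomorph.measurableEmbedding
      (fun z => Real.sin ⟪ξ, z⟫)
    simp only [LinearIsometryEquiv.coe_neg, inner_neg_right, Real.sin_neg, integral_neg] at h
    linarith
  have e : ∀ z : Ed d, Complex.exp (((⟪ξ, z⟫ : ℝ) : ℂ) * Complex.I) =
      ((Real.cos ⟪ξ, z⟫ : ℝ) : ℂ) + ((Real.sin ⟪ξ, z⟫ : ℝ) : ℂ) * Complex.I := by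
    intro z
    rw [Complex.exp_mul_I]; push_cast; rfl
  simp_rw [e]
  rw [integral_add (sphere_integrable d hd _ (by fun_prop)) (sphere_integrable d hd _ (by fun_prop)),
    integral_mul_const, integral_complex_ofReal, integral_complex_ofReal, hs]
  simp [msph]

lemma msph_continuous (d : ℕ) (hd : 2 ≤ d) : Continuous (msph d) := by
  have := sphere_finite d hd
  unfold msph
  refine continuous_of_dominated (bound := fun _ => 1) ?_ ?_ (integrable_const _) ?_
  · intro x
    exact (by fun_prop : Continuous fun z : Ed d => Real.cos ⟪x, z⟫).aestronglyMeasurable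
  · intro x
    exact Filter.Eventually.of_forall fun z => Real.abs_cos_le_one _
  · exact Filter.Eventually.of_forall fun z => by fun_prop

/-- Facts about the Fourier transform of `ψ₀`. -/
lemma fhat_facts (d : ℕ) (ψ₀ : Ed d → ℂ) (hψ : Admissible d ψ₀) :
    ContDiff ℝ (⊤ : ℕ∞) (𝓕 ψ₀) ∧ Integrable (𝓕 ψ₀) ∧ (∃ B : ℝ, ∀ ξ, ‖𝓕 ψ₀ ξ‖ ≤ B) ∧
    (∀ x y : Ed d, ‖x‖ = ‖y‖ → 𝓕 ψ₀ x = 𝓕 ψ₀ y) ∧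
    (∀ x, psiOf d ψ₀ x = ∫ ξ, Complex.exp (((2 * Real.pi * ⟪ξ, x⟫ : ℝ) : ℂ) * Complex.I) * (𝓕 ψ₀ ξ) ^ 2) := by
  obtain ⟨h1, h2, h3, h4⟩ := hψ
  have hcs : HasCompactSupport ψ₀ := by
    apply HasCompactSupport.intro (isCompact_closedBall (0 : Ed d) (1/10))
    intro x hx
    by_contra h
    exact hx (by simpa using h2 x h)
  let S : SchwartzMap (Ed d) ℂ := hcs.toSchwartzMap h1
  have hS : (S : Ed d → ℂ) = ψ₀ := rfl
  have hF : (𝓕 S : SchwartzMap (Ed d) ℂ) = (𝓕 ψ₀ : Ed d → ℂ) := by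
    rw [SchwartzMap.fourier_coe, hS]
  refine ⟨?_, ?_, ?_, ?_, ?_⟩
  · rw [← hF]; exact (𝓕 S).smooth ⊤
  · rw [← hF]; exact (𝓕 S).integrable
  · rw [← hF]
    exact ⟨‖(𝓕 S).toBoundedContinuousFunction‖, fun ξ => (𝓕 S).toBoundedContinuousFunction.norm_coe_le_norm ξ⟩
  · intro x y hxy
    obtain ⟨A, rfl⟩ := exists_isom d x y hxy
    rw [← Real.fourier_comp_linearIsometry]
    have e : ψ₀ ∘ A = ψ₀ := by
      funext z
      exact h3 _ _ (by simp)
    rw [e]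
  · intro x
    have e1 : psiOf d ψ₀ x = SchwartzMap.convolution (ContinuousLinearMap.mul ℂ ℂ) S S x := by
      rw [SchwartzMap.convolution_apply]
      rfl
    have e2 : SchwartzMap.convolution (ContinuousLinearMap.mul ℂ ℂ) S S x
        = 𝓕⁻ (𝓕 (SchwartzMap.convolution (ContinuousLinearMap.mul ℂ ℂ) S S)) x := by simp
    rw [e1, e2, SchwartzMap.fourierInv_coe, Real.fourierInv_eq']
    congr 1; funext ξ
    rw [SchwartzMap.fourier_convolution_apply, Real.fourier_bilin_convolution_eq _ S.integrable S.integrable, hS]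
    simp [pow_two]

/-- Fourier transform of `F_{y,r}`. -/
def Ahat (d : ℕ) (ψ₀ : Ed d → ℂ) (y : Ed d) (r : ℝ) (ξ : Ed d) : ℂ :=
  ((r ^ ((d:ℝ) - 1) : ℝ) : ℂ) * ((𝓕 ψ₀ ξ) ^ 2 *
    Complex.exp (((-(2 * Real.pi * ⟪ξ, y⟫) : ℝ) : ℂ) * Complex.I) * (msph d ((2 * Real.pi * r) • ξ) : ℂ))

lemma fsq_integrable (d : ℕ) (ψ₀ : Ed d → ℂ) (hψ : Admissible d ψ₀) :
    Integrable (fun ξ => (𝓕 ψ₀ ξ) ^ 2) := by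
  obtain ⟨h1, h2, ⟨B, hB⟩, -⟩ := fhat_facts d ψ₀ hψ
  simp_rw [pow_two]
  exact h2.bdd_mul h1.continuous.aestronglyMeasurable (Filter.Eventually.of_forall hB)

lemma Ahat_continuous (d : ℕ) (hd : 2 ≤ d) (ψ₀ : Ed d → ℂ) (hψ : Admissible d ψ₀) (y : Ed d) (r : ℝ) :
    Continuous (Ahat d ψ₀ y r) := by
  have h1 := (fhat_facts d ψ₀ hψ).1.continuous
  have h2 := msph_continuous d hd
  unfold Ahat
  fun_prop

lemma Ahat_integrable (d : ℕ) (hd : 2 ≤ d) (ψ₀ : Ed d → ℂ) (hψ : Admissible d ψ₀) (y : Ed d) (r : ℝ) :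
    Integrable (Ahat d ψ₀ y r) := by
  have h0 := fsq_integrable d ψ₀ hψ
  refine (h0.norm.const_mul (|r ^ ((d:ℝ) - 1)| * (sphereM d 1).real univ)).mono'
    (Ahat_continuous d hd ψ₀ hψ y r).aestronglyMeasurable (Filter.Eventually.of_forall fun ξ => ?_)
  unfold Ahat
  rw [norm_mul, norm_mul, norm_mul, Complex.norm_exp_ofReal_mul_I, Complex.norm_real, Complex.norm_real,
    Real.norm_eq_abs, Real.norm_eq_abs, mul_one, mul_assoc |r ^ ((d:ℝ) - 1)|, mul_comm ((sphereM d 1).real univ)]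
  gcongr
  exact msph_le d hd _

lemma Fyr_eq (d : ℕ) (hd : 2 ≤ d) (ψ₀ : Ed d → ℂ) (hψ : Admissible d ψ₀) (y : Ed d) (r : ℝ) (hr : 0 < r) :
    Fyr d ψ₀ y r = 𝓕⁻ (Ahat d ψ₀ y r) := by
  have := sphere_finite d hd
  funext x
  have hc := (fhat_facts d ψ₀ hψ).1.continuous
  have hinv := (fhat_facts d ψ₀ hψ).2.2.2.2
  have h0 := fsq_integrable d ψ₀ hψ
  rw [Fyr, sphere_integral d hd r hr, Real.fourierInv_eq']
  simp_rw [hinv]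
  rw [integral_integral_swap]
  · rw [← integral_const_mul]
    congr 1; funext ξ
    rw [integral_mul_const]
    have e : ∀ z : Ed d, Complex.exp (((2 * Real.pi * ⟪ξ, x - y - r • z⟫ : ℝ) : ℂ) * Complex.I) =
        Complex.exp (((2 * Real.pi * ⟪ξ, x⟫ : ℝ) : ℂ) * Complex.I) *
        Complex.exp (((-(2 * Real.pi * ⟪ξ, y⟫) : ℝ) : ℂ) * Complex.I) *
        Complex.exp (((⟪-((2 * Real.pi * r) • ξ), z⟫ : ℝ) : ℂ) * Complex.I) := by
      intro z
      rw [← Complex.exp_add, ← Complex.exp_add, ← add_mul, ← add_mul, ← Complex.ofReal_add, ← Complex.ofReal_add]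
      congr 3
      simp only [inner_sub_right, inner_smul_right, inner_neg_left, inner_smul_left]
      simp; ring
    simp_rw [e]
    rw [integral_const_mul, sphere_cexp d hd, msph_radial d _ ((2 * Real.pi * r) • ξ) (norm_neg _)]
    rw [smul_eq_mul, Ahat]
    ring
  · refine Integrable.mono' (g := fun p : Ed d × Ed d => ‖(𝓕 ψ₀ p.2) ^ 2‖) (h0.norm.comp_snd _) ?_ ?_
    · apply Continuous.aestronglyMeasurable
      simp only [Function.uncurry_def]
      fun_prop
    · refine Filter.Eventually.of_forall fun p => ?_
      simp only [Function.uncurry_def]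
      rw [norm_mul, Complex.norm_exp_ofReal_mul_I, one_mul]

lemma psi_supp (d : ℕ) (ψ₀ : Ed d → ℂ) (hψ : Admissible d ψ₀) (x : Ed d) (hx : 1 / 5 < ‖x‖) :
    psiOf d ψ₀ x = 0 := by
  unfold psiOf
  rw [show (fun y => ψ₀ y * ψ₀ (x - y)) = fun _ => 0 from ?_, integral_zero]
  funext y
  by_contra h
  have h1 := hψ.2.1 y (left_ne_zero_of_mul h)
  have h2 := hψ.2.1 (x - y) (right_ne_zero_of_mul h)
  have := norm_add_le y (x - y)
  rw [add_sub_cancel] at this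
  linarith

lemma Fyr_supp (d : ℕ) (ψ₀ : Ed d → ℂ) (hψ : Admissible d ψ₀) (y : Ed d) (r : ℝ) (x : Ed d)
    (hx : 1 / 5 < |‖x - y‖ - r|) : Fyr d ψ₀ y r x = 0 := by
  unfold Fyr
  apply integral_eq_zero_of_ae
  filter_upwards [sphere_ae d r] with z hz
  apply psi_supp d ψ₀ hψ
  have := abs_norm_sub_norm_le (x - y) z
  rw [hz] at this
  linarith

lemma Fyr_integrable (d : ℕ) (hd : 2 ≤ d) (ψ₀ : Ed d → ℂ) (hψ : Admissible d ψ₀) (y : Ed d) (r : ℝ) (hr : 0 < r) :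
    Integrable (Fyr d ψ₀ y r) := by
  apply Continuous.integrable_of_hasCompactSupport
  · rw [Fyr_eq d hd ψ₀ hψ y r hr, Real.fourierInv_eq_fourier_comp_neg]
    exact VectorFourier.fourierIntegral_continuous Real.continuous_fourierChar
      (by exact continuous_inner) (Ahat_integrable d hd ψ₀ hψ y r).comp_neg
  · apply HasCompactSupport.intro (isCompact_closedBall y (r + 1/5))
    intro x hx
    apply Fyr_supp d ψ₀ hψ
    rw [mem_closedBall, dist_eq_norm, not_le] at hx
    exact lt_of_lt_of_le (by linarith) (le_abs_self _)

lemma Fyr_fourier (d : ℕ) (hd : 2 ≤ d) (ψ₀ : Ed d → ℂ) (hψ : Admissible d ψ₀) (y : Ed d) (r : ℝ) (hr : 0 < r) :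
    𝓕 (Fyr d ψ₀ y r) = Ahat d ψ₀ y r := by
  rw [Fyr_eq d hd ψ₀ hψ y r hr]
  apply (Ahat_continuous d hd ψ₀ hψ y r).fourier_fourierInv_eq (Ahat_integrable d hd ψ₀ hψ y r)
  have h := Fyr_integrable d hd ψ₀ hψ y r hr
  rw [Fyr_eq d hd ψ₀ hψ y r hr] at h
  have h2 := h.comp_neg
  refine h2.congr (Filter.Eventually.of_forall fun x => ?_)
  simp [Real.fourierInv_eq_fourier_neg]

lemma plancherel_F (d : ℕ) (hd : 2 ≤ d) (ψ₀ : Ed d → ℂ) (hψ : Admissible d ψ₀) (y y' : Ed d) (r r' : ℝ)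
    (hr : 0 < r) (hr' : 0 < r') :
    ∫ x : Ed d, Fyr d ψ₀ y r x * (starRingEnd ℂ) (Fyr d ψ₀ y' r' x) =
      ∫ ξ : Ed d, Ahat d ψ₀ y r ξ * (starRingEnd ℂ) (Ahat d ψ₀ y' r' ξ) := by
  have h := VectorFourier.integral_sesq_fourierIntegral_eq_neg_flip (innerSL ℂ : ℂ →L⋆[ℂ] ℂ →L[ℂ] ℂ)
    (L := innerₗ (Ed d)) (μ := volume) (ν := volume)
    Real.continuous_fourierChar (by exact continuous_inner) (Fyr_integrable d hd ψ₀ hψ y' r' hr')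
    (Ahat_integrable d hd ψ₀ hψ y r)
  have e1 : VectorFourier.fourierIntegral Real.fourierChar volume (innerₗ (Ed d)) (Fyr d ψ₀ y' r') = Ahat d ψ₀ y' r' :=
    Fyr_fourier d hd ψ₀ hψ y' r' hr'
  have e2 : VectorFourier.fourierIntegral Real.fourierChar volume (-(innerₗ (Ed d)).flip) (Ahat d ψ₀ y r) =
      Fyr d ψ₀ y r := by
    rw [Fyr_eq d hd ψ₀ hψ y r hr]
    simp; rfl
  rw [e1, e2] at h
  simp only [innerSL_apply_apply, RCLike.inner_apply] at h
  exact h.symm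

end fourierSide

section final

open scoped RealInnerProductSpace

lemma taylor_vanish (V : Type) [NormedAddCommGroup V] [NormedSpace ℝ V] [FiniteDimensional ℝ V] (n : ℕ) :
    ∀ (G : Type) [NormedAddCommGroup G] [NormedSpace ℝ G] (f : V → G),
      ContDiff ℝ (⊤ : ℕ∞) f → (∀ k < n, iteratedFDeriv ℝ k f 0 = 0) →
      ∃ C : ℝ, 0 ≤ C ∧ ∀ x, ‖x‖ ≤ 1 → ‖f x‖ ≤ C * ‖x‖ ^ n := by
  induction n with
  | zero =>
    intro G _ _ f hf _
    obtain ⟨C, hC⟩ := (isCompact_closedBall (0 : V) 1).exists_bound_of_continuousOn hf.continuous.continuousOn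
    refine ⟨|C|, abs_nonneg _, fun x hx => ?_⟩
    have := hC x (by simpa using hx)
    simpa using this.trans (le_abs_self C)
  | succ n ih =>
    intro G _ _ f hf h0
    have hf' : ContDiff ℝ (⊤ : ℕ∞) (fderiv ℝ f) := hf.fderiv_right (by simp)
    obtain ⟨C, hC0, hC⟩ := ih (V →L[ℝ] G) (fderiv ℝ f) hf' (by
      intro k hk
      rw [← norm_eq_zero, norm_iteratedFDeriv_fderiv, h0 (k+1) (by omega), norm_zero])
    refine ⟨C, hC0, fun x hx => ?_⟩
    have hf0 : f 0 = 0 := by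
      have := h0 0 (by omega)
      rw [← norm_eq_zero, norm_iteratedFDeriv_zero] at this
      exact norm_eq_zero.1 this
    have h := Convex.norm_image_sub_le_of_norm_fderiv_le (𝕜 := ℝ) (f := f) (C := C * ‖x‖ ^ n)
      (s := closedBall (0 : V) ‖x‖) (x := 0) (y := x)
      (fun z _ => (hf.differentiable (by simp)).differentiableAt)
      (fun z hz => by
        have hz : ‖z‖ ≤ ‖x‖ := by simpa using hz
        refine (hC z (hz.trans hx)).trans ?_
        gcongr) (convex_closedBall _ _) (by simp) (by simp)
    rw [hf0, sub_zero, sub_zero] at h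
    rw [pow_succ, ← mul_assoc]; exact h

lemma radial_avg (d : ℕ) (hd : 2 ≤ d) (h : Ed d → ℂ) (hi : Integrable h) (hc : Continuous h)
    (hr : ∀ x y : Ed d, ‖x‖ = ‖y‖ → h x = h y) (w : Ed d) :
    ((sphereM d 1).real univ : ℂ) *
      (∫ ξ, h ξ * Complex.exp (((2 * Real.pi * ⟪ξ, w⟫ : ℝ) : ℂ) * Complex.I)) =
    ∫ ξ, h ξ * (msph d ((2 * Real.pi * ‖w‖) • ξ) : ℂ) := by
  have := sphere_finite d hd
  set J : Ed d → ℂ := fun w => ∫ ξ, h ξ * Complex.exp (((2 * Real.pi * ⟪ξ, w⟫ : ℝ) : ℂ) * Complex.I) with hJ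
  have hJr : ∀ x y : Ed d, ‖x‖ = ‖y‖ → J x = J y := by
    intro x y hxy
    obtain ⟨A, rfl⟩ := exists_isom d x y hxy
    simp only [hJ]
    rw [← A.measurePreserving.integral_comp A.toHomeomorph.measurableEmbedding
      (fun ξ => h ξ * Complex.exp (((2 * Real.pi * ⟪ξ, A x⟫ : ℝ) : ℂ) * Complex.I))]
    congr 1; funext ξ
    rw [LinearIsometryEquiv.inner_map_map, hr (A ξ) ξ (by simp)]
  have h1 : ∫ z, J (‖w‖ • z) ∂(sphereM d 1) = ((sphereM d 1).real univ : ℂ) * J w := by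
    have : ∫ z, J (‖w‖ • z) ∂(sphereM d 1) = ∫ z, J w ∂(sphereM d 1) := by
      apply integral_congr_ae
      filter_upwards [sphere_ae d 1] with z hz
      exact hJr _ _ (by simp [norm_smul, hz])
    rw [this, integral_const, Complex.real_smul]
  rw [← h1]
  simp only [hJ]
  rw [integral_integral_swap]
  · congr 1; funext ξ
    rw [integral_const_mul, ← sphere_cexp d hd]
    congr 2; funext z
    congr 3
    simp only [inner_smul_left, inner_smul_right]
    simp; ring
  · refine Integrable.mono' (g := fun p : Ed d × Ed d => ‖h p.2‖) (hi.norm.comp_snd _) ?_ ?_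
    · apply Continuous.aestronglyMeasurable
      simp only [Function.uncurry_def]
      fun_prop
    · refine Filter.Eventually.of_forall fun p => ?_
      simp only [Function.uncurry_def]
      rw [norm_mul, Complex.norm_exp_ofReal_mul_I, mul_one]

lemma fhat_weight (d : ℕ) (hd : 2 ≤ d) (ψ₀ : Ed d → ℂ) (hψ : Admissible d ψ₀) :
    ∃ D : ℝ, 0 ≤ D ∧ ∀ ξ : Ed d, ξ ≠ 0 → ‖𝓕 ψ₀ ξ‖ * (‖ξ‖ ^ (-(((d:ℝ) - 1) / 2)) * ‖ξ‖ ^ (-(((d:ℝ) - 1) / 2)) *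
      (1 + ‖ξ‖ ^ (-(((d:ℝ) - 1) / 2)))) ≤ D := by
  obtain ⟨h1, h2, ⟨B, hB⟩, -⟩ := fhat_facts d ψ₀ hψ
  obtain ⟨T, hT0, hT⟩ := taylor_vanish (Ed d) (2 * d) ℂ (𝓕 ψ₀) h1 (fun k hk => hψ.2.2.2 k (by omega))
  have hB0 : 0 ≤ B := (norm_nonneg _).trans (hB 0)
  have hd' : (2:ℝ) ≤ d := by exact_mod_cast hd
  set α := ((d:ℝ) - 1) / 2 with hα
  have hα0 : 0 ≤ α := by linarith
  refine ⟨2 * (B + T), by positivity, fun ξ hξ => ?_⟩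
  have ht : 0 < ‖ξ‖ := norm_pos_iff.2 hξ
  set t := ‖ξ‖ with htdef
  rcases le_total 1 t with h | h
  · have e : t ^ (-α) ≤ 1 := Real.rpow_le_one_of_one_le_of_nonpos h (by linarith)
    have e0 : 0 ≤ t ^ (-α) := by positivity
    calc _ ≤ B * (1 * 1 * (1 + 1)) := by gcongr; exact hB ξ
      _ ≤ _ := by linarith
  · have e : 1 ≤ t ^ (-α) := Real.one_le_rpow_of_pos_of_le_one_of_nonpos ht h (by linarith)
    calc _ ≤ (T * t ^ (2 * d)) * (t ^ (-α) * t ^ (-α) * (t ^ (-α) + t ^ (-α))) := by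
          gcongr; exact hT ξ h
      _ = 2 * T * (t ^ ((2 * d : ℕ) : ℝ) * (t ^ (-α) * t ^ (-α) * t ^ (-α))) := by
          rw [Real.rpow_natCast]; ring
      _ = 2 * T * t ^ (((2 * d : ℕ) : ℝ) + (-α + -α + -α)) := by
          rw [← Real.rpow_add ht, ← Real.rpow_add ht, ← Real.rpow_add ht]
      _ ≤ 2 * T * 1 := by
          gcongr
          apply Real.rpow_le_one ht.le h
          push_cast; rw [hα]; linarith
      _ ≤ _ := by linarith

lemma main_bound (d : ℕ) (hd : 2 ≤ d) (ψ₀ : Ed d → ℂ) (hψ : Admissible d ψ₀) :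
    ∃ K : ℝ, 0 ≤ K ∧ ∀ r r' : ℝ, 1 < r → 1 < r' → ∀ y y' : Ed d,
      ‖∫ x : Ed d, Fyr d ψ₀ y r x * (starRingEnd ℂ) (Fyr d ψ₀ y' r' x)‖ ≤
        K * (r * r') ^ (((d : ℝ) - 1) / 2) * (1 + dist y y') ^ (-(((d : ℝ) - 1) / 2)) := by
  have hfin := sphere_finite d hd
  obtain ⟨C, hC0, hC1, hC2⟩ := msph_decay d hd
  obtain ⟨D, hD0, hD⟩ := fhat_weight d hd ψ₀ hψ
  obtain ⟨h1, h2, ⟨B, hB⟩, hrad, -⟩ := fhat_facts d ψ₀ hψ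
  have hB0 : 0 ≤ B := (norm_nonneg _).trans (hB 0)
  have hfc := h1.continuous
  have hmc := msph_continuous d hd
  have hd' : (2:ℝ) ≤ d := by exact_mod_cast hd
  set α := ((d:ℝ) - 1) / 2 with hα
  have hα0 : 0 ≤ α := by linarith
  have hf0 : 𝓕 ψ₀ 0 = 0 := by
    have := hψ.2.2.2 0 (by omega)
    rw [← norm_eq_zero, norm_iteratedFDeriv_zero] at this
    exact norm_eq_zero.1 this
  set M := (sphereM d 1).real univ with hM
  have hM0 : 0 ≤ M := measureReal_nonneg
  refine ⟨M⁻¹ * (C ^ 3 * 2 ^ α * D * B ^ 2 * ∫ ξ, ‖𝓕 ψ₀ ξ‖), by positivity, ?_⟩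
  intro r r' hr hr' y y'
  have hr0 : 0 < r := by linarith
  have hr0' : 0 < r' := by linarith
  rw [plancherel_F d hd ψ₀ hψ y y' r r' hr0 hr0']
  set w := y' - y with hw
  have hdist : dist y y' = ‖w‖ := by rw [dist_comm, dist_eq_norm]
  rw [hdist]
  let h : Ed d → ℂ := fun ξ => ((r ^ ((d:ℝ) - 1) * r' ^ ((d:ℝ) - 1) * ‖𝓕 ψ₀ ξ‖ ^ 4 *
    msph d ((2 * Real.pi * r) • ξ) * msph d ((2 * Real.pi * r') • ξ) : ℝ) : ℂ)
  have hAA : ∀ ξ, Ahat d ψ₀ y r ξ * (starRingEnd ℂ) (Ahat d ψ₀ y' r' ξ) =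
      h ξ * Complex.exp (((2 * Real.pi * ⟪ξ, w⟫ : ℝ) : ℂ) * Complex.I) := by
    intro ξ
    have e1 : (starRingEnd ℂ) (Complex.exp (((-(2 * Real.pi * ⟪ξ, y'⟫) : ℝ) : ℂ) * Complex.I)) =
        Complex.exp (((2 * Real.pi * ⟪ξ, y'⟫ : ℝ) : ℂ) * Complex.I) := by
      rw [← Complex.exp_conj, map_mul, Complex.conj_ofReal, Complex.conj_I]
      congr 1; push_cast; ring
    have e2 : Complex.exp (((2 * Real.pi * ⟪ξ, w⟫ : ℝ) : ℂ) * Complex.I) =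
        Complex.exp (((-(2 * Real.pi * ⟪ξ, y⟫) : ℝ) : ℂ) * Complex.I) *
        Complex.exp (((2 * Real.pi * ⟪ξ, y'⟫ : ℝ) : ℂ) * Complex.I) := by
      rw [← Complex.exp_add, hw, inner_sub_right]
      congr 1; push_cast; ring
    have e3 : ((‖𝓕 ψ₀ ξ‖ ^ 4 : ℝ) : ℂ) = (𝓕 ψ₀ ξ) ^ 2 * (starRingEnd ℂ (𝓕 ψ₀ ξ)) ^ 2 := by
      rw [← mul_pow, Complex.mul_conj']
      push_cast; ring
    have e4 : h ξ = ((r ^ ((d:ℝ)-1) : ℝ):ℂ) * ((r' ^ ((d:ℝ)-1) : ℝ):ℂ) *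
        ((𝓕 ψ₀ ξ) ^ 2 * (starRingEnd ℂ (𝓕 ψ₀ ξ)) ^ 2) *
        ((msph d ((2 * Real.pi * r) • ξ) : ℝ) : ℂ) *
        ((msph d ((2 * Real.pi * r') • ξ) : ℝ) : ℂ) := by
      rw [← e3, ← Complex.ofReal_mul, ← Complex.ofReal_mul, ← Complex.ofReal_mul,
        ← Complex.ofReal_mul]
    rw [e4, e2]
    simp only [Ahat, map_mul, Complex.conj_ofReal, map_pow, e1]
    ring
  have hci : Continuous h := by
    simp only [h]
    fun_prop
  have hhi : Integrable h := by
    have := (Ahat_integrable d hd ψ₀ hψ y r).mul_bdd (c := |r' ^ ((d:ℝ) - 1)| * (B ^ 2 * C))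
      (g := fun ξ => (starRingEnd ℂ) (Ahat d ψ₀ y' r' ξ))
      (Complex.continuous_conj.comp (Ahat_continuous d hd ψ₀ hψ y' r')).aestronglyMeasurable
      (Filter.Eventually.of_forall fun ξ => by
        rw [RCLike.norm_conj, Ahat, norm_mul, norm_mul, norm_mul, Complex.norm_exp_ofReal_mul_I,
          Complex.norm_real, Complex.norm_real, Real.norm_eq_abs, Real.norm_eq_abs, mul_one, norm_pow]
        gcongr
        · exact hB ξ
        · exact hC1 _)
    rw [← integrable_norm_iff hci.aestronglyMeasurable]
    refine this.norm.congr (Filter.Eventually.of_forall fun ξ => ?_)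
    simp only
    rw [hAA, norm_mul, Complex.norm_exp_ofReal_mul_I, mul_one]
  have hhr : ∀ x y : Ed d, ‖x‖ = ‖y‖ → h x = h y := by
    intro x y hxy
    simp only [h]
    rw [hrad x y hxy, msph_radial d ((2 * Real.pi * r) • x) ((2 * Real.pi * r) • y) (by simp [norm_smul, hxy]),
      msph_radial d ((2 * Real.pi * r') • x) ((2 * Real.pi * r') • y) (by simp [norm_smul, hxy])]
  have havg := radial_avg d hd h hhi hci hhr w
  simp_rw [hAA]
  set J := ∫ ξ, h ξ * Complex.exp (((2 * Real.pi * ⟪ξ, w⟫ : ℝ) : ℂ) * Complex.I) with hJ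
  have hb : ∀ c : ℝ, 0 < c → ∀ ξ : Ed d, ξ ≠ 0 →
      |msph d ((2 * Real.pi * c) • ξ)| ≤ C * (c ^ (-α) * ‖ξ‖ ^ (-α)) := by
    intro c hc ξ hξ
    have ht : 0 < ‖ξ‖ := norm_pos_iff.2 hξ
    have hpi := Real.pi_gt_three
    refine (hC2 _ (smul_ne_zero (by positivity) hξ)).trans ?_
    rw [← Real.mul_rpow hc.le ht.le]
    refine mul_le_mul_of_nonneg_left ?_ hC0.le
    apply Real.rpow_le_rpow_of_nonpos (by positivity) _ (by linarith)
    rw [norm_smul, Real.norm_of_nonneg (by positivity)]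
    gcongr
    nlinarith
  have hbw : ∀ ξ : Ed d, ξ ≠ 0 →
      |msph d ((2 * Real.pi * ‖w‖) • ξ)| ≤ C * (2 ^ α * (1 + ‖w‖) ^ (-α) * (1 + ‖ξ‖ ^ (-α))) := by
    intro ξ hξ
    have ht : 0 < ‖ξ‖ := norm_pos_iff.2 hξ
    have hw0 : 0 ≤ ‖w‖ := norm_nonneg w
    have htt : 0 < ‖ξ‖ ^ (-α) := by positivity
    have key : (2:ℝ) ^ α * (1 + ‖w‖) ^ (-α) = ((1 + ‖w‖) / 2) ^ (-α) := by
      rw [Real.div_rpow (by positivity) (by norm_num), Real.rpow_neg (by norm_num : (0:ℝ) ≤ 2)]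
      field_simp
    rw [key]
    rcases le_total ‖w‖ 1 with h | h
    · have : 1 ≤ ((1 + ‖w‖) / 2) ^ (-α) :=
        Real.one_le_rpow_of_pos_of_le_one_of_nonpos (by positivity) (by linarith) (by linarith)
      refine (hC1 _).trans ?_
      refine le_mul_of_one_le_right hC0.le ?_
      nlinarith
    · refine (hb ‖w‖ (by linarith) ξ hξ).trans ?_
      refine mul_le_mul_of_nonneg_left ?_ hC0.le
      have h3 : ‖w‖ ^ (-α) ≤ ((1 + ‖w‖) / 2) ^ (-α) :=
        Real.rpow_le_rpow_of_nonpos (by positivity) (by linarith) (by linarith)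
      gcongr
      linarith
  have hpt : ∀ ξ, ‖h ξ * (msph d ((2 * Real.pi * ‖w‖) • ξ) : ℂ)‖ ≤
      (C ^ 3 * 2 ^ α * D * B ^ 2 * ((r * r') ^ α * (1 + ‖w‖) ^ (-α))) * ‖𝓕 ψ₀ ξ‖ := by
    intro ξ
    by_cases hξ : ξ = 0
    · simp [h, hξ, hf0]
    have ht : 0 < ‖ξ‖ := norm_pos_iff.2 hξ
    have hpow : ∀ c : ℝ, 0 < c → c ^ ((d:ℝ) - 1) * c ^ (-α) = c ^ α := by
      intro c hc
      rw [← Real.rpow_add hc]; congr 1; rw [hα]; ring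
    rw [norm_mul, Complex.norm_real, Complex.norm_real, Real.norm_eq_abs, Real.norm_eq_abs,
      abs_mul, abs_mul, abs_of_nonneg (by positivity : 0 ≤ r ^ ((d:ℝ) - 1) * r' ^ ((d:ℝ) - 1) * ‖𝓕 ψ₀ ξ‖ ^ 4)]
    calc _ ≤ r ^ ((d:ℝ) - 1) * r' ^ ((d:ℝ) - 1) * ‖𝓕 ψ₀ ξ‖ ^ 4 * (C * (r ^ (-α) * ‖ξ‖ ^ (-α))) *
          (C * (r' ^ (-α) * ‖ξ‖ ^ (-α))) * (C * (2 ^ α * (1 + ‖w‖) ^ (-α) * (1 + ‖ξ‖ ^ (-α)))) := by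
          gcongr
          · exact hb r hr0 ξ hξ
          · exact hb r' hr0' ξ hξ
          · exact hbw ξ hξ
      _ = C ^ 3 * 2 ^ α * (‖𝓕 ψ₀ ξ‖ * (‖ξ‖ ^ (-α) * ‖ξ‖ ^ (-α) * (1 + ‖ξ‖ ^ (-α)))) * ‖𝓕 ψ₀ ξ‖ ^ 2 *
          (((r ^ ((d:ℝ) - 1) * r ^ (-α)) * (r' ^ ((d:ℝ) - 1) * r' ^ (-α))) * (1 + ‖w‖) ^ (-α)) * ‖𝓕 ψ₀ ξ‖ := by ring
      _ ≤ _ := by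
          rw [hpow r hr0, hpow r' hr0', ← Real.mul_rpow hr0.le hr0'.le]
          gcongr
          · exact hD ξ hξ
          · exact hB ξ
  have hJM : M * ‖J‖ ≤ (C ^ 3 * 2 ^ α * D * B ^ 2 * ((r * r') ^ α * (1 + ‖w‖) ^ (-α))) * ∫ ξ, ‖𝓕 ψ₀ ξ‖ := by
    have : M * ‖J‖ = ‖(M : ℂ) * J‖ := by
      rw [norm_mul, Complex.norm_real, Real.norm_of_nonneg hM0]
    rw [this, havg, ← integral_const_mul]
    exact norm_integral_le_of_norm_le (h2.norm.const_mul _) (Filter.Eventually.of_forall hpt)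
  rcases hM0.eq_or_lt with h0 | hMpos
  · have hm0 : ∀ ξ, msph d ξ = 0 := fun ξ => by
      have := msph_le d hd ξ
      rw [← hM, ← h0] at this
      exact abs_nonpos_iff.1 this
    have : J = 0 := by
      rw [hJ]; simp [h, hm0]
    rw [this, norm_zero]; positivity
  · rw [mul_assoc, mul_assoc, inv_mul_eq_div, le_div_iff₀ hMpos, mul_comm]
    refine hJM.trans (le_of_eq ?_)
    ring

end final

/-- the scalar product estimate
`|⟨F_{y,r}, F_{y',r'}⟩| ≤ C (rr')^{(d-1)/2} / (1 + |y-y'| + |r-r'|)^{(d-1)/2}`. -/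
theorem scalar_product_estimate
    (d : ℕ) (hd : 2 ≤ d) (ψ₀ : Ed d → ℂ) (hψ : Admissible d ψ₀) :
    ∃ C : ℝ, 0 < C ∧
      ∀ r r' : ℝ, 1 < r → 1 < r' → ∀ y y' : Ed d,
        ‖∫ x : Ed d, Fyr d ψ₀ y r x * (starRingEnd ℂ) (Fyr d ψ₀ y' r' x)‖ ≤
          C * (r * r') ^ (((d : ℝ) - 1) / 2) /
            (1 + dist y y' + |r - r'|) ^ (((d : ℝ) - 1) / 2) := by
  obtain ⟨K, hK0, hK⟩ := main_bound d hd ψ₀ hψ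
  have hd' : (2:ℝ) ≤ d := by exact_mod_cast hd
  set α := ((d:ℝ) - 1) / 2 with hα
  have hα0 : 0 ≤ α := by linarith
  refine ⟨K * 2 ^ α + 1, by positivity, ?_⟩
  intro r r' hr hr' y y'
  have hr0 : 0 < r := by linarith
  have hr0' : 0 < r' := by linarith
  have hdn : 0 ≤ dist y y' := dist_nonneg
  by_cases hfar : 1 + dist y y' < |r - r'|
  · have : ∀ x, Fyr d ψ₀ y r x * (starRingEnd ℂ) (Fyr d ψ₀ y' r' x) = 0 := by
      intro x
      by_cases hx : 1 / 5 < |‖x - y‖ - r|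
      · rw [Fyr_supp d ψ₀ hψ y r x hx, zero_mul]
      · rw [Fyr_supp d ψ₀ hψ y' r' x, map_zero, mul_zero]
        by_contra hx'
        push Not at hx hx'
        have h1 := abs_norm_sub_norm_le (x - y) (x - y')
        have h2 : ‖x - y - (x - y')‖ = dist y y' := by
          rw [dist_comm, dist_eq_norm]; congr 1; abel
        rw [h2] at h1
        rw [abs_le] at hx hx' h1
        rcases lt_abs.1 hfar with h | h <;> linarith
    simp_rw [this]
    rw [integral_zero, norm_zero]
    positivity
  · push Not at hfar
    refine (hK r r' hr hr' y y').trans ?_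
    rw [le_div_iff₀ (by positivity)]
    have h1 : (1 + dist y y' + |r - r'|) ^ α ≤ 2 ^ α * (1 + dist y y') ^ α := by
      rw [← Real.mul_rpow (by norm_num) (by positivity)]
      apply Real.rpow_le_rpow (by positivity) _ hα0
      linarith
    have h2 : (1 + dist y y') ^ (-α) * (1 + dist y y') ^ α = 1 := by
      rw [← Real.rpow_add (by positivity)]; simp
    calc _ ≤ K * (r * r') ^ α * (1 + dist y y') ^ (-α) * (2 ^ α * (1 + dist y y') ^ α) := by gcongr
      _ = K * 2 ^ α * (r * r') ^ α * ((1 + dist y y') ^ (-α) * (1 + dist y y') ^ α) := by ring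
      _ = K * 2 ^ α * (r * r') ^ α := by rw [h2, mul_one]
      _ ≤ _ := by gcongr; linarith
end
end

section
/- Let (𝒳_1, μ_1) and (𝒳_2, μ_2) be σ-finite measure spaces and let μ = μ_1 × μ_2 be the product measure. Then for 1 ≤ p < ∞ and p ≤ ν ≤ ∞ there is a constant C = C(p,ν) such that for every μ-measurable function G on 𝒳_1 × 𝒳_2, ‖G‖_{L^{p,ν}(𝒳_1×𝒳_2, μ)} ≤ C (∫_{𝒳_1} ‖G(x_1, ·)‖_{L^{p,ν}(𝒳_2, μ_2)}^p dμ_1(x_1))^{1/p}. -/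
open MeasureTheory Set
open scoped ENNReal NNReal

noncomputable section

/-- The Lorentz `L^{p,ν}` quasi-norm (`ν = ⊤` giving the weak-type quasi-norm). -/
def lorentzNorm {X : Type*} [MeasurableSpace X] (μ : Measure X) (p : ℝ) (ν : ℝ≥0∞)
    (f : X → ℂ) : ℝ≥0∞ :=
  if ν = ⊤ then
    ⨆ (α : ℝ) (_ : 0 < α), ENNReal.ofReal α * (μ {x | α < ‖f x‖}) ^ (1 / p)
  else
    (ENNReal.ofReal p *
        ∫⁻ α in Set.Ioi (0 : ℝ),
          ENNReal.ofReal (α ^ (ν.toReal - 1)) * (μ {x | α < ‖f x‖}) ^ (ν.toReal / p))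
      ^ (1 / ν.toReal)

/-- Minkowski's integral inequality. -/
theorem minkowski_lintegral {X A : Type*} [MeasurableSpace X] [MeasurableSpace A]
    (μ : Measure X) (κ : Measure A) [SigmaFinite μ] [SigmaFinite κ] (r : ℝ) (hr : 1 ≤ r)
    (f : X → A → ℝ≥0∞) (hf : Measurable (Function.uncurry f)) :
    ∫⁻ a, (∫⁻ x, f x a ∂μ) ^ r ∂κ ≤ (∫⁻ x, (∫⁻ a, f x a ^ r ∂κ) ^ (1 / r) ∂μ) ^ r := by
  rcases hr.eq_or_lt with rfl | hr1
  · simp only [ENNReal.rpow_one, div_one]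
    exact (lintegral_lintegral_swap hf.aemeasurable).ge
  have hr0 : 0 < r := by linarith
  have hpq : (Real.conjExponent r).HolderConjugate r := (Real.HolderConjugate.conjExponent hr1).symm
  set q := Real.conjExponent r with hq
  have hq0 : 0 < q := hpq.pos
  have hsum : 1 / r + 1 / q = 1 := by
    have := hpq.inv_add_inv_eq_one
    simp only [one_div]; linarith
  refine le_of_forall_lt fun L hL => ?_
  set M := ∫⁻ x, (∫⁻ a, f x a ^ r ∂κ) ^ (1 / r) ∂μ with hM
  rw [lintegral_eq_nnreal] at hL
  simp_rw [lt_iSup_iff] at hL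
  obtain ⟨g₀, hg₀, g₀L⟩ := hL
  have hL2 : L < ∫⁻ x, g₀ x ∂κ := by
    convert g₀L
    rw [← SimpleFunc.lintegral_eq_lintegral]
    simp only [SimpleFunc.coe_map, Function.comp_apply]
  obtain ⟨g, hg, gtop, gL⟩ := SimpleFunc.exists_lt_lintegral_simpleFunc_of_lt_lintegral hL2
  refine gL.trans_le ?_
  set I := ∫⁻ x, (g x : ℝ≥0∞) ∂κ with hI
  have hgm : Measurable fun a => (g a : ℝ≥0∞) := g.measurable.coe_nnreal_ennreal
  have hI0 : I ≠ 0 := (bot_le.trans_lt gL).ne'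
  have hgF : ∀ a, (g a : ℝ≥0∞) ≤ (g a : ℝ≥0∞) ^ (1 / q) * ∫⁻ x, f x a ∂μ := by
    intro a
    have h1 : (g a : ℝ≥0∞) ^ (1 / r) ≤ ∫⁻ x, f x a ∂μ := by
      rw [one_div, ENNReal.rpow_inv_le_iff hr0]
      exact (ENNReal.coe_le_coe.2 (hg a)).trans (hg₀ a)
    calc (g a : ℝ≥0∞) = (g a : ℝ≥0∞) ^ (1 / q) * (g a : ℝ≥0∞) ^ (1 / r) := by
          rw [← ENNReal.rpow_add_of_nonneg _ _ (by positivity) (by positivity), add_comm, hsum,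
            ENNReal.rpow_one]
      _ ≤ _ := by gcongr
  have key : I ≤ I ^ (1 / q) * M := by
    calc I ≤ ∫⁻ a, (g a : ℝ≥0∞) ^ (1 / q) * ∫⁻ x, f x a ∂μ ∂κ := lintegral_mono hgF
      _ = ∫⁻ a, ∫⁻ x, (g a : ℝ≥0∞) ^ (1 / q) * f x a ∂μ ∂κ := by
          refine lintegral_congr fun a => ?_
          rw [lintegral_const_mul]
          exact hf.comp (measurable_id.prodMk measurable_const)
      _ = ∫⁻ x, ∫⁻ a, (g a : ℝ≥0∞) ^ (1 / q) * f x a ∂κ ∂μ := by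
          refine lintegral_lintegral_swap (Measurable.aemeasurable ?_)
          exact ((hgm.comp measurable_fst).pow_const _).mul (hf.comp measurable_swap)
      _ ≤ ∫⁻ x, I ^ (1 / q) * (∫⁻ a, f x a ^ r ∂κ) ^ (1 / r) ∂μ := by
          refine lintegral_mono fun x => ?_
          have := ENNReal.lintegral_mul_le_Lp_mul_Lq κ hpq
            (f := fun a => (g a : ℝ≥0∞) ^ (1 / q)) (g := f x)
            (hgm.pow_const _).aemeasurable
            (hf.comp (measurable_const.prodMk measurable_id)).aemeasurable
          simp only [Pi.mul_apply, ← ENNReal.rpow_mul, one_div, inv_mul_cancel₀ hq0.ne',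
            ENNReal.rpow_one] at this
          simpa only [one_div] using this
      _ = I ^ (1 / q) * M := by
          rw [lintegral_const_mul' _ _ (ENNReal.rpow_ne_top_of_nonneg (by positivity) gtop.ne)]
  have hIr : I ^ (1 / r) ≤ M := by
    have h2 : I ^ (1 / q) * I ^ (1 / r) ≤ I ^ (1 / q) * M := by
      rwa [← ENNReal.rpow_add_of_nonneg _ _ (by positivity) (by positivity), add_comm, hsum,
            ENNReal.rpow_one]
    refine (ENNReal.mul_le_mul_iff_right ?_ ?_).1 h2
    · exact (ENNReal.rpow_pos (pos_iff_ne_zero.2 hI0) gtop.ne).ne'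
    · exact ENNReal.rpow_ne_top_of_nonneg (by positivity) gtop.ne
  rwa [one_div, ENNReal.rpow_inv_le_iff hr0] at hIr

theorem lorentzNorm_congr_ae {X : Type*} [MeasurableSpace X] (μ : Measure X) (p : ℝ) (ν : ℝ≥0∞)
    {f g : X → ℂ} (h : f =ᵐ[μ] g) : lorentzNorm μ p ν f = lorentzNorm μ p ν g := by
  have : ∀ α : ℝ, μ {x | α < ‖f x‖} = μ {x | α < ‖g x‖} := by
    intro α
    refine measure_congr ?_
    filter_upwards [h] with x hx
    change (α < ‖f x‖) = (α < ‖g x‖)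
    rw [hx]
  simp only [lorentzNorm, this]

theorem lorentz_fubini_meas (p : ℝ) (ν : ℝ≥0∞) (hp : 1 ≤ p) (hν : ENNReal.ofReal p ≤ ν)
    {X₁ X₂ : Type*} [MeasurableSpace X₁] [MeasurableSpace X₂]
    (μ₁ : Measure X₁) (μ₂ : Measure X₂) [SigmaFinite μ₁] [SigmaFinite μ₂]
    (G : X₁ × X₂ → ℂ) (hG : Measurable G) :
    lorentzNorm (μ₁.prod μ₂) p ν G ≤
      (∫⁻ x₁, lorentzNorm μ₂ p ν (fun x₂ => G (x₁, x₂)) ^ p ∂μ₁) ^ (1 / p) := by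
  have hp0 : 0 < p := by linarith
  have hprod : ∀ α : ℝ, (μ₁.prod μ₂) {x | α < ‖G x‖} =
      ∫⁻ x₁, μ₂ {x₂ | α < ‖G (x₁, x₂)‖} ∂μ₁ := fun α =>
    Measure.prod_apply (measurableSet_lt measurable_const hG.norm)
  by_cases htop : ν = ⊤
  · simp only [lorentzNorm, if_pos htop, hprod]
    refine iSup₂_le fun α hα => ?_
    rw [one_div, ENNReal.le_rpow_inv_iff hp0, ENNReal.mul_rpow_of_nonneg _ _ hp0.le,
      ← ENNReal.rpow_mul, inv_mul_cancel₀ hp0.ne', ENNReal.rpow_one,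
      ← lintegral_const_mul' _ _ (ENNReal.rpow_ne_top_of_nonneg hp0.le ENNReal.ofReal_ne_top)]
    refine lintegral_mono fun x => ?_
    calc ENNReal.ofReal α ^ p * μ₂ {x₂ | α < ‖G (x, x₂)‖}
        = (ENNReal.ofReal α * μ₂ {x₂ | α < ‖G (x, x₂)‖} ^ p⁻¹) ^ p := by
          rw [ENNReal.mul_rpow_of_nonneg _ _ hp0.le,
            ← ENNReal.rpow_mul, inv_mul_cancel₀ hp0.ne', ENNReal.rpow_one]
      _ ≤ _ := by
          gcongr
          exact le_iSup₂ (f := fun (α : ℝ) (_ : 0 < α) =>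
            ENNReal.ofReal α * μ₂ {x₂ | α < ‖G (x, x₂)‖} ^ p⁻¹) α hα
  · simp only [lorentzNorm, if_neg htop, hprod]
    have hpn : p ≤ ν.toReal := (ENNReal.ofReal_le_iff_le_toReal htop).1 hν
    set n := ν.toReal with hn
    have hn0 : 0 < n := by linarith
    set r := n / p with hr
    have hr1 : 1 ≤ r := (one_le_div hp0).2 hpn
    have hr0 : 0 < r := by linarith
    -- put all the weights inside
    let w : ℝ → ℝ≥0∞ := fun α => (ENNReal.ofReal p * ENNReal.ofReal (α ^ (n - 1))) ^ (1 / r)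
    have hw : Measurable w := by fun_prop
    have hwt : ∀ α, w α ≠ ⊤ := fun α => ENNReal.rpow_ne_top_of_nonneg (by positivity)
      (ENNReal.mul_ne_top ENNReal.ofReal_ne_top ENNReal.ofReal_ne_top)
    let f : X₁ → ℝ → ℝ≥0∞ := fun x α => w α * μ₂ {x₂ | α < ‖G (x, x₂)‖}
    have hf : Measurable (Function.uncurry f) := by
      refine (hw.comp measurable_snd).mul ?_
      have hs : MeasurableSet {z : (X₁ × ℝ) × X₂ | z.1.2 < ‖G (z.1.1, z.2)‖} :=
        measurableSet_lt (by fun_prop) (by fun_prop)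
      exact measurable_measure_prodMk_left (ν := μ₂) hs
    have hwr : ∀ α (t : ℝ≥0∞), (w α * t) ^ r =
        ENNReal.ofReal p * (ENNReal.ofReal (α ^ (n - 1)) * t ^ r) := by
      intro α t
      rw [ENNReal.mul_rpow_of_nonneg _ _ hr0.le, ← ENNReal.rpow_mul, one_div,
        inv_mul_cancel₀ hr0.ne', ENNReal.rpow_one, mul_assoc]
    have key := minkowski_lintegral μ₁ (volume.restrict (Ioi (0 : ℝ))) r hr1 f hf
    have e1 : ∀ α, (∫⁻ x, f x α ∂μ₁) = w α * ∫⁻ x, μ₂ {x₂ | α < ‖G (x, x₂)‖} ∂μ₁ :=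
      fun α => lintegral_const_mul' _ _ (hwt α)
    simp only [e1] at key
    simp only [f, hwr] at key
    simp only [lintegral_const_mul' _ _ (ENNReal.ofReal_ne_top (r := p))] at key
    have e2 : ∀ t : ℝ≥0∞, (t ^ (1 / n)) ^ p = t ^ (1 / r) := by
      intro t
      rw [← ENNReal.rpow_mul]; congr 1; rw [hr]; field_simp
    simp only [e2]
    rw [one_div n, ENNReal.rpow_inv_le_iff hn0, ← ENNReal.rpow_mul]
    have e3 : 1 / p * n = r := by rw [hr]; field_simp
    rwa [e3]

/-- the Fubini-type property of Lorentz norms on a product space: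
`‖G‖_{L^{p,ν}(μ₁×μ₂)} ≤ C (∫ ‖G(x₁,·)‖_{L^{p,ν}(μ₂)}^p dμ₁)^{1/p}` for
`1 ≤ p < ∞`, `p ≤ ν ≤ ∞`. -/
theorem lorentz_fubini (p : ℝ) (ν : ℝ≥0∞) (hp : 1 ≤ p) (hν : ENNReal.ofReal p ≤ ν) :
    ∃ C : ℝ, 0 < C ∧
      ∀ (X₁ X₂ : Type) [MeasurableSpace X₁] [MeasurableSpace X₂],
      ∀ (μ₁ : Measure X₁) (μ₂ : Measure X₂) [SigmaFinite μ₁] [SigmaFinite μ₂],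
      ∀ G : X₁ × X₂ → ℂ, AEMeasurable G (μ₁.prod μ₂) →
        lorentzNorm (μ₁.prod μ₂) p ν G ≤
          ENNReal.ofReal C *
            (∫⁻ x₁, lorentzNorm μ₂ p ν (fun x₂ => G (x₁, x₂)) ^ p ∂μ₁) ^ (1 / p) := by
  refine ⟨1, one_pos, ?_⟩
  intro X₁ X₂ _ _ μ₁ μ₂ _ _ G hG
  rw [ENNReal.ofReal_one, one_mul]
  rw [lorentzNorm_congr_ae _ p ν hG.ae_eq_mk]
  refine (lorentz_fubini_meas p ν hp hν μ₁ μ₂ _ hG.measurable_mk).trans_eq ?_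
  congr 1
  refine lintegral_congr_ae ?_
  filter_upwards [Measure.ae_ae_of_ae_prod hG.ae_eq_mk] with x hx
  have hx' : (fun x₂ => G (x, x₂)) =ᵐ[μ₂] fun x₂ => hG.mk G (x, x₂) := hx
  rw [lorentzNorm_congr_ae _ p ν hx']
end
end
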